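/- arXiv:0909.4915 — 2 statements merged into one kernel-verified Lean document; each statement's English description precedes it below -/
import Mathlib

section
/- Let d ≥ 1. Parameterize affine hyperplanes in ℝ^d by pairs (v, t) in S^{d−1} × ℝ via H(v,t) = {y ∈ ℝ^d : ⟨y, v⟩ = t}, so that each hyperplane corresponds to exactly the two pairs (v,t) and (−v,−t). Let μ be a probability measure on S^{d−1} × ℝ that is absolutely continuous with respect to the product of the surface measure on S^{d−1} and Lebesgue measure on ℝ, has compact support, and is invariant under the involution (v,t) ↦ (−v,−t). Then there exists a point x ∈ ℝ^d such that for every ray r starting at x, μ({(v,t) : H(v,t) ∩ r ≠ ∅}) ≥ 1/(d+1). -/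
/-!
Call a direction `u` bad at `x` if the hyperplanes that lie ahead of `x` along `u`, pass through `x`
or are parallel to `u` have measure less than `1/(d+1)`. If `0` were a convex combination of bad
directions at `x`, then by Carathéodory's theorem it would be one of at most `d+1` of them, and some
hyperplane would lie strictly behind `x` along all of these; but the directions along which a given
hyperplane lies behind `x` form an open half-space. So the convex hull of the bad directions at `x`
omits `0`. Moreover, being bad is an open condition on `x`, and far out the outward direction is
bad: only hyperplanes with normal almost orthogonal to that direction can fail to lie behind `x`,
and great subspheres are null. So if every point had a bad direction, a partition of unity would
give a `C¹` map `h` without zeros such that `h x = x` for `x` far out.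

Such an `h` normalizes to a `C¹` retraction of a ball onto its boundary, which is excluded by the
argument of Milnor and Rogers: if `f` is `C¹` and equals the identity on the frontier of a compact
set `s`, then the integral over `s` of the Jacobian of `(1 - t) id + t f` is a polynomial in `t`,
and for small `t` it is the volume of `s` because the map is then a bijection of `s`. Hence it is
the volume of `s` also at `t = 1`, whereas the Jacobian of a map into a sphere vanishes.
-/

open scoped InnerProductSpace ENNReal
open MeasureTheory

/-- The affine hyperplane in `ℝ^d` with unit normal `v` and offset `t`:
`H(v,t) = {y | ⟪y, v⟫ = t}`. -/
def HypOf {d : ℕ} (v : Metric.sphere (0 : EuclideanSpace ℝ (Fin d)) 1) (t : ℝ) :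
    Set (EuclideanSpace ℝ (Fin d)) :=
  {y | ⟪y, (v : EuclideanSpace ℝ (Fin d))⟫_ℝ = t}

/-- The ray starting at `x` in direction `u`. -/
def Ray {d : ℕ} (x u : EuclideanSpace ℝ (Fin d)) : Set (EuclideanSpace ℝ (Fin d)) :=
  {y | ∃ t : ℝ, 0 ≤ t ∧ y = x + t • u}

open Set Filter Topology Polynomial Module
open scoped NNReal Pointwise

theorem exists_polynomial_eval_eq_det_one_add_smul {R M : Type*} [CommRing R] [Nontrivial R]
    [AddCommGroup M] [Module R M] [Module.Free R M] [Module.Finite R M] (A : End R M) :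
    ∃ p : R[X], p.natDegree ≤ finrank R M ∧ ∀ t, p.eval t = LinearMap.det (1 + t • A) := by
  let b := finBasis R M
  refine ⟨((X : R[X]) • (LinearMap.toMatrix b b A).map C + (1 : Matrix _ _ R).map C).det,
    by simpa using Polynomial.natDegree_det_X_add_C_le (LinearMap.toMatrix b b A) 1, fun t => ?_⟩
  rw [← LinearMap.det_toMatrix b, ← coe_evalRingHom, RingHom.map_det]
  congr 1
  ext i j
  by_cases hij : i = j <;> simp [hij, LinearMap.toMatrix_one, mul_comm t, add_comm]

theorem exists_polynomial_eval_eq_integral {α : Type*} [MeasurableSpace α] {μ : Measure α}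
    {p : α → ℝ[X]} {n : ℕ} (hdeg : ∀ x, (p x).natDegree ≤ n)
    (hintegrable : ∀ t, Integrable (fun x => (p x).eval t) μ) :
    ∃ P : ℝ[X], ∀ t, P.eval t = ∫ x, (p x).eval t ∂μ := by
  have hnodes : InjOn ((↑) : ℕ → ℝ) (Finset.range (n + 1)) := Nat.cast_injective.injOn
  refine ⟨Lagrange.interpolate (Finset.range (n + 1)) (↑) fun i => ∫ x, (p x).eval (i : ℝ) ∂μ,
    fun t => ?_⟩
  have hinterp (x : α) : (p x).eval t = ∑ i ∈ Finset.range (n + 1),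
      (p x).eval (i : ℝ) * (Lagrange.basis (Finset.range (n + 1)) (↑) i).eval t := by
    have hlt : (p x).degree < (Finset.range (n + 1)).card := by
      rw [Finset.card_range]
      exact degree_le_natDegree.trans_lt (by exact_mod_cast Nat.lt_succ_of_le (hdeg x))
    conv_lhs => rw [Lagrange.eq_interpolate hnodes hlt]
    simp [Lagrange.interpolate_apply, eval_finsetSum]
  calc (Lagrange.interpolate (Finset.range (n + 1)) (↑) fun i => ∫ x, (p x).eval (i : ℝ) ∂μ).eval t
      = ∑ i ∈ Finset.range (n + 1), (∫ x, (p x).eval (i : ℝ) ∂μ) *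
          (Lagrange.basis (Finset.range (n + 1)) (↑) i).eval t := by
        simp [Lagrange.interpolate_apply, eval_finsetSum]
    _ = ∫ x, (p x).eval t ∂μ := by
        simp_rw [hinterp, ← integral_mul_const]
        rw [integral_finsetSum]
        exact fun i _ => (hintegrable i).mul_const _

theorem nonempty_inter_frontier_of_isPreconnected {X : Type*} [TopologicalSpace X] {s t : Set X}
    (ht : IsPreconnected t) (hts : (t ∩ s).Nonempty) (hts' : (t ∩ sᶜ).Nonempty) :
    (t ∩ frontier s).Nonempty := by
  by_contra hempty
  have hcover : t ⊆ interior s ∪ interior sᶜ := by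
    rw [← compl_frontier_eq_union_interior]
    exact fun x hx hxs => hempty ⟨x, hx, hxs⟩
  obtain ⟨x, hxt, hxs⟩ := hts
  obtain ⟨y, hyt, hys⟩ := hts'
  obtain ⟨z, -, hz, hz'⟩ := ht _ _ isOpen_interior isOpen_interior hcover
    ⟨x, hxt, (hcover hxt).resolve_right fun h => interior_subset h hxs⟩
    ⟨y, hyt, (hcover hyt).resolve_left fun h => hys (interior_subset h)⟩
  exact interior_subset hz' (interior_subset hz)

section Perturbation

variable {E : Type*} [NormedAddCommGroup E] [NormedSpace ℝ E]

theorem bijective_id_add_smul_of_lipschitzWith [CompleteSpace E] {g : E → E} {K : ℝ≥0}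
    (hg : LipschitzWith K g) {t : ℝ} (ht : ‖t‖₊ * K < 1) :
    Function.Bijective fun x => x + t • g x := by
  have happrox : ApproximatesLinearOn (fun x => x + t • g x)
      (ContinuousLinearEquiv.refl ℝ E : E →L[ℝ] E) univ (‖t‖₊ * K) := by
    refine LipschitzOnWith.approximatesLinearOn (LipschitzWith.lipschitzOnWith ?_)
    have hsub : (fun x => x + t • g x) - ⇑(ContinuousLinearEquiv.refl ℝ E : E →L[ℝ] E) =
        (t • ·) ∘ g := _root_.funext fun x => add_sub_cancel_left x (t • g x)
    exact hsub ▸ (lipschitzWith_smul t).comp hg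
  have hsmall : Subsingleton E ∨
      ‖t‖₊ * K < ‖((ContinuousLinearEquiv.refl ℝ E).symm : E →L[ℝ] E)‖₊⁻¹ := by
    rcases subsingleton_or_nontrivial E with hE | hE
    · exact .inl hE
    · exact .inr (by simpa using ht)
  exact ⟨injOn_univ.1 (happrox.injOn hsmall), happrox.surjective hsmall⟩

theorem lipschitzWith_indicator_of_eqOn_frontier {F : Type*} [SeminormedAddCommGroup F]
    {g : E → F} {s : Set E} {K : ℝ≥0} (hg : LipschitzOnWith K g s) (hs : IsClosed s)
    (hfr : EqOn g 0 (frontier s)) : LipschitzWith K (s.indicator g) := by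
  have hcross : ∀ x ∈ s, ∀ y ∉ s, ‖g x‖ ≤ K * dist x y := by
    intro x hx y hy
    obtain ⟨z, hzxy, hz⟩ := nonempty_inter_frontier_of_isPreconnected
      (convex_segment x y).isPreconnected ⟨x, left_mem_segment ℝ x y, hx⟩
      ⟨y, right_mem_segment ℝ x y, hy⟩
    calc ‖g x‖ = dist (g x) (g z) := by simp [hfr hz]
      _ ≤ K * dist x z := hg.dist_le_mul x hx z (hs.frontier_subset hz)
      _ ≤ K * dist x y := by
        gcongr
        exact dist_comm x z ▸ segment_subset_closedBall_left x y hzxy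
  refine LipschitzWith.of_dist_le_mul fun x y => ?_
  by_cases hx : x ∈ s <;> by_cases hy : y ∈ s
  · simpa [hx, hy] using hg.dist_le_mul x hx y hy
  · simpa [hx, hy] using hcross x hx y hy
  · simpa [hx, hy, dist_comm] using hcross y hy x hx
  · simp only [indicator_of_notMem hx, indicator_of_notMem hy, dist_self]
    positivity

theorem bijOn_id_add_smul_of_eqOn_frontier [CompleteSpace E] {g : E → E} {s : Set E} {K : ℝ≥0}
    (hg : LipschitzOnWith K g s) (hs : IsClosed s) (hfr : EqOn g 0 (frontier s)) {t : ℝ}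
    (ht : ‖t‖₊ * K < 1) : BijOn (fun x => x + t • g x) s s := by
  have hbij := bijective_id_add_smul_of_lipschitzWith
    (lipschitzWith_indicator_of_eqOn_frontier hg hs hfr) ht
  have hcompl : BijOn (fun x => x + t • s.indicator g x) sᶜ sᶜ :=
    (bijOn_id sᶜ).congr fun x hx => by simp [indicator_of_notMem hx]
  have himage : (fun x => x + t • s.indicator g x) '' s = s := by
    rw [← compl_inj_iff, ← image_compl_eq hbij, hcompl.image_eq]
  refine BijOn.congr (f₁ := fun x => x + t • s.indicator g x) ?_ fun x hx => by
    simp [indicator_of_mem hx]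
  simpa only [himage] using hbij.injective.injOn.bijOn_image (s := s)

variable [FiniteDimensional ℝ E] [MeasurableSpace E] [BorelSpace E] (μ : Measure E)
  [μ.IsAddHaarMeasure]

theorem eventually_integral_det_id_add_smul_fderiv_eq {s : Set E} (hs : IsCompact s) {k : E → E}
    (hk : ContDiff ℝ 1 k) (hfr : EqOn k 0 (frontier s)) :
    ∀ᶠ t in 𝓝 (0 : ℝ),
      ∫ x in s, (ContinuousLinearMap.id ℝ E + t • fderiv ℝ k x).det ∂μ = μ.real s := by
  obtain ⟨K, hK⟩ := hk.locallyLipschitz.locallyLipschitzOn.exists_lipschitzOnWith_of_compact hs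
  have hcont : Continuous fun z : ℝ × E =>
      (ContinuousLinearMap.id ℝ E + z.1 • fderiv ℝ k z.2).det :=
    ContinuousLinearMap.continuous_det.comp (continuous_const.add
      (continuous_fst.smul ((hk.continuous_fderiv one_ne_zero).comp continuous_snd)))
  have hdet : ∀ᶠ t in 𝓝 (0 : ℝ), ∀ x ∈ s,
      0 < (ContinuousLinearMap.id ℝ E + t • fderiv ℝ k x).det :=
    hs.eventually_forall_of_forall_eventually fun x _ =>
      hcont.continuousAt.eventually_const_lt (by simp [ContinuousLinearMap.det])
  have hsmall : ∀ᶠ t in 𝓝 (0 : ℝ), ‖t‖₊ * K < 1 :=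
    (Continuous.tendsto (f := fun t : ℝ => ‖t‖₊ * K) (by fun_prop) 0).eventually_lt_const (by simp)
  filter_upwards [hdet, hsmall] with t htdet htK
  have hbij := bijOn_id_add_smul_of_eqOn_frontier hK hs.isClosed hfr htK
  have hderiv : ∀ x ∈ s, HasFDerivWithinAt (fun x => x + t • k x)
      (ContinuousLinearMap.id ℝ E + t • fderiv ℝ k x) s x := fun x _ =>
    ((hasFDerivAt_id x).add
      ((hk.differentiable one_ne_zero x).hasFDerivAt.const_smul t)).hasFDerivWithinAt
  calc ∫ x in s, (ContinuousLinearMap.id ℝ E + t • fderiv ℝ k x).det ∂μ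
      = ∫ x in s, |(ContinuousLinearMap.id ℝ E + t • fderiv ℝ k x).det| • (1 : ℝ) ∂μ :=
        setIntegral_congr_fun hs.measurableSet fun x hx => by simp [abs_of_pos (htdet x hx)]
    _ = ∫ _ in (fun x => x + t • k x) '' s, (1 : ℝ) ∂μ :=
        (integral_image_eq_integral_abs_det_fderiv_smul μ hs.measurableSet hderiv hbij.injOn
          fun _ => 1).symm
    _ = μ.real s := by simp [hbij.image_eq]

theorem integral_det_fderiv_eq_of_eqOn_frontier {s : Set E} (hs : IsCompact s) {f : E → E}
    (hf : ContDiff ℝ 1 f) (hfr : EqOn f id (frontier s)) :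
    ∫ x in s, (fderiv ℝ f x).det ∂μ = μ.real s := by
  set k : E → E := fun x => f x - x
  have hk : ContDiff ℝ 1 k := hf.sub contDiff_id
  choose p hdeg hp using fun x =>
    exists_polynomial_eval_eq_det_one_add_smul (fderiv ℝ k x : E →ₗ[ℝ] E)
  have hp_det (t : ℝ) (x : E) :
      (p x).eval t = (ContinuousLinearMap.id ℝ E + t • fderiv ℝ k x).det := hp x t
  have hintegrable (t : ℝ) : Integrable (fun x => (p x).eval t) (μ.restrict s) := by
    simp_rw [hp_det]
    exact (ContinuousLinearMap.continuous_det.comp (continuous_const.add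
      ((hk.continuous_fderiv one_ne_zero).const_smul t))).continuousOn.integrableOn_compact hs
  obtain ⟨P, hP⟩ := exists_polynomial_eval_eq_integral hdeg hintegrable
  have hsmall : ∀ᶠ t in 𝓝 (0 : ℝ), P.eval t = (C (μ.real s)).eval t := by
    filter_upwards [eventually_integral_det_id_add_smul_fderiv_eq μ hs hk
      fun x hx => sub_eq_zero.2 (hfr hx)] with t ht
    rw [hP, eval_C, ← ht]
    simp_rw [hp_det]
  have hconst : P = C (μ.real s) :=
    eq_of_infinite_eval_eq _ _ (infinite_of_mem_nhds 0 hsmall)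
  have hfk (x : E) : fderiv ℝ f x = ContinuousLinearMap.id ℝ E + (1 : ℝ) • fderiv ℝ k x := by
    rw [fderiv_fun_sub (hf.differentiable one_ne_zero x) differentiableAt_fun_id]
    simp
  calc ∫ x in s, (fderiv ℝ f x).det ∂μ = P.eval 1 := by simp_rw [hP, hp_det, hfk]
    _ = μ.real s := by rw [hconst, eval_C]

end Perturbation

section Zero

variable {E : Type*} [NormedAddCommGroup E] [InnerProductSpace ℝ E] [FiniteDimensional ℝ E]

theorem det_eq_zero_of_forall_norm_eq {f : E → E} {r : ℝ} (hr : r ≠ 0) (hf : ∀ x, ‖f x‖ = r)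
    {f' : E →L[ℝ] E} {x : E} (hf' : HasFDerivAt f f' x) : f'.det = 0 := by
  have horth (v : E) : ⟪f x, f' v⟫_ℝ = 0 := by
    have hconst : (fun y => ‖f y‖ ^ 2) = fun _ => r ^ 2 := by simp_rw [hf]
    have huniq := (hconst ▸ hf'.norm_sq).unique (hasFDerivAt_const (r ^ 2) x)
    simpa using congr($huniq v)
  by_contra hdet
  obtain ⟨v, hv⟩ : ∃ v, f' v = f x :=
    ((End.isUnit_iff _).1 ((LinearMap.isUnit_iff_isUnit_det (f' : E →ₗ[ℝ] E)).2
      (isUnit_iff_ne_zero.2 hdet))).surjective (f x)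
  have hself : ⟪f x, f x⟫_ℝ = 0 := hv ▸ horth v
  exact hr (by rw [← hf x, inner_self_eq_zero.1 hself, norm_zero])

theorem exists_eq_zero_of_eqOn_sphere {h : E → E} (hh : ContDiff ℝ 1 h) {r : ℝ} (hr : 0 < r)
    (hid : EqOn h id (Metric.sphere 0 r)) : ∃ x, h x = 0 := by
  borelize E
  by_contra! h0
  let f : E → E := fun x => (r * ‖h x‖⁻¹) • h x
  have hf : ContDiff ℝ 1 f :=
    (contDiff_const.mul ((hh.norm ℝ h0).inv fun x => norm_ne_zero_iff.2 (h0 x))).smul hh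
  have hnorm (x : E) : ‖f x‖ = r := by
    simp [f, norm_smul, abs_of_pos hr, h0 x]
  have hfr : EqOn f id (frontier (Metric.closedBall 0 r)) := by
    rw [frontier_closedBall _ hr.ne']
    intro x hx
    have hxr : ‖x‖ = r := by simpa using hx
    simp [f, hid hx, hxr, hr.ne']
  have hvol := integral_det_fderiv_eq_of_eqOn_frontier (Measure.addHaar : Measure E)
    (isCompact_closedBall 0 r) hf hfr
  simp_rw [fun x => det_eq_zero_of_forall_norm_eq hr.ne' hnorm
    (hf.differentiable one_ne_zero x).hasFDerivAt, integral_zero] at hvol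
  exact hvol.not_lt (ENNReal.toReal_pos (Metric.measure_closedBall_pos _ 0 hr).ne'
    measure_closedBall_lt_top.ne)

theorem exists_eq_empty_of_zero_notMem_convexHull {B : E → Set E}
    (hopen : ∀ u, IsOpen {x | u ∈ B x}) (hzero : ∀ x, 0 ∉ convexHull ℝ (B x))
    (hfar : ∀ᶠ x in Bornology.cobounded E, x ∈ B x) : ∃ x, B x = ∅ := by
  by_contra! hne
  obtain ⟨r, hr⟩ : ∃ r : ℝ, ∀ x, r ≤ ‖x‖ → x ∈ B x := by
    simpa using hasBasis_cobounded_norm.eventually_iff.1 hfar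
  obtain ⟨R, hrR, hR⟩ : ∃ R, r < R ∧ 0 < R := ⟨max r 0 + 1, by grind, by positivity⟩
  let t : E → Set E := fun x => convexHull ℝ (B x) ∩ {y | R ≤ ‖x‖ → y = x}
  have ht (x : E) : Convex ℝ (t x) := by
    refine (convex_convexHull ℝ _).inter ?_
    by_cases hx : R ≤ ‖x‖ <;> simp [hx, convex_univ]
  obtain ⟨g, hg⟩ := exists_contMDiffMap_forall_mem_convex_of_local (n := 1)
    (modelWithCornersSelf ℝ E) ht fun x => by
      rcases lt_or_ge ‖x‖ R with hx | hx
      · obtain ⟨u, hu⟩ := hne x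
        exact ⟨_, ((hopen u).inter (isOpen_lt continuous_norm continuous_const)).mem_nhds ⟨hu, hx⟩,
          fun _ => u, contMDiffOn_const, fun y hy =>
            ⟨subset_convexHull ℝ _ hy.1, fun hRy => absurd hRy (not_le.2 hy.2)⟩⟩
      · exact ⟨_, (isOpen_lt continuous_const continuous_norm).mem_nhds (hrR.trans_le hx), id,
          contMDiffOn_id, fun y hy =>
            ⟨subset_convexHull ℝ _ (hr _ (mem_ofPred_eq ▸ hy).le), fun _ => rfl⟩⟩
  obtain ⟨x, hx⟩ := exists_eq_zero_of_eqOn_sphere g.contMDiff.contDiff hR fun x hx =>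
    (hg x).2 (mem_sphere_zero_iff_norm.1 hx).ge
  exact hzero x (hx ▸ (hg x).1)

end Zero

section Semicontinuity

variable {Ω : Type*} [MeasurableSpace Ω] {P : Measure Ω} [IsFiniteMeasure P]

theorem le_measure_limsup {s : ℕ → Set Ω} (hs : ∀ n, NullMeasurableSet (s n) P) {c : ℝ≥0∞}
    (hc : ∀ n, c ≤ P (s n)) : c ≤ P (limsup s atTop) := by
  rw [limsup_eq_iInf_iSup_of_nat']
  have hanti : Antitone fun n => ⋃ i, s (i + n) := fun m n hmn =>
    iUnion_subset fun i => subset_iUnion_of_subset (i + (n - m)) (by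
      rw [add_assoc, Nat.sub_add_cancel hmn])
  refine ge_of_tendsto' (tendsto_measure_iInter_atTop
    (fun n => .iUnion fun i => hs (i + n)) hanti ⟨0, measure_ne_top P _⟩) fun n => ?_
  exact (hc n).trans (measure_mono (subset_iUnion_of_subset 0 (by rw [zero_add])))

theorem upperSemicontinuous_measure_preimage {X Y : Type*} [TopologicalSpace X]
    [FirstCountableTopology X] [TopologicalSpace Y] {f : X → Ω → Y} {F : Set Y} (hF : IsClosed F)
    (hcont : ∀ ω, Continuous fun x => f x ω) (hmeas : ∀ x, NullMeasurableSet (f x ⁻¹' F) P) :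
    UpperSemicontinuous fun x => P (f x ⁻¹' F) := by
  intro x c hc
  by_contra hfreq
  obtain ⟨y, hy, hyc⟩ := exists_seq_forall_of_frequently (not_eventually.1 hfreq)
  refine hc.not_ge ((le_measure_limsup (fun n => hmeas (y n)) fun n => not_lt.1 (hyc n)).trans
    (measure_mono fun ω hω => ?_))
  have hlim : Tendsto (fun n => f (y n) ω) atTop (𝓝 (f x ω)) := ((hcont ω).tendsto x).comp hy
  have hfreq' : ∃ᶠ n in atTop, f (y n) ω ∈ F := mem_limsup_iff_frequently_mem.1 hω
  exact hF.mem_of_frequently_of_tendsto hfreq' hlim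

end Semicontinuity

section Halfspaces

variable {E : Type*} [NormedAddCommGroup E] [InnerProductSpace ℝ E] [FiniteDimensional ℝ E]
  {Ω : Type*} [MeasurableSpace Ω] {P : Measure Ω}

theorem measure_biUnion_finset_lt_one {ι : Type*} {s : Finset ι} {A : ι → Set Ω} {n : ℕ}
    (hcard : s.card ≤ n) (hA : ∀ i ∈ s, P (A i) < 1 / n) : P (⋃ i ∈ s, A i) < 1 := by
  rcases s.eq_empty_or_nonempty with rfl | hs
  · simp
  calc P (⋃ i ∈ s, A i) ≤ ∑ i ∈ s, P (A i) := measure_biUnion_finset_le _ _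
    _ < ∑ _i ∈ s, 1 / (n : ℝ≥0∞) := ENNReal.sum_lt_sum_of_nonempty hs hA
    _ = s.card * (1 / n) := by rw [Finset.sum_const, nsmul_eq_mul]
    _ ≤ n * (1 / n) := by gcongr
    _ = 1 := by
      have hn : n ≠ 0 := (hs.card_pos.trans_le hcard).ne'
      rw [one_div]
      exact ENNReal.mul_inv_cancel (by exact_mod_cast hn) (ENNReal.natCast_ne_top n)

theorem zero_notMem_convexHull_setOf_measure_lt [IsProbabilityMeasure P] (W : Ω → E) :
    0 ∉ convexHull ℝ {u : E | P {ω | 0 ≤ ⟪u, W ω⟫_ℝ} < 1 / (finrank ℝ E + 1 : ℕ)} := by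
  intro h0
  rw [convexHull_eq_union] at h0
  simp only [mem_iUnion] at h0
  obtain ⟨s, hs, hind, h0⟩ := h0
  have hcard : s.card ≤ finrank ℝ E + 1 := by
    simpa using hind.card_le_finrank_succ.trans (Nat.succ_le_succ (Submodule.finrank_le _))
  obtain ⟨ω, hω⟩ : ∃ ω, ω ∉ ⋃ u ∈ s, {ω | 0 ≤ ⟪u, W ω⟫_ℝ} := by
    by_contra! hcover
    have hlt := measure_biUnion_finset_lt_one hcard fun u hu => hs hu
    simp [eq_univ_of_forall hcover] at hlt
  have hsub : (s : Set E) ⊆ {u | ⟪u, W ω⟫_ℝ < 0} := fun u hu => by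
    simp only [mem_iUnion, mem_ofPred_eq, not_exists, not_le] at hω
    exact hω u hu
  have hconv : Convex ℝ {u | ⟪u, W ω⟫_ℝ < 0} :=
    convex_halfSpace_lt ⟨fun a b => inner_add_left a b _, fun c a => real_inner_smul_left a _ c⟩ 0
  simpa using convexHull_min hsub hconv h0

end Halfspaces

section RandomHyperplane

variable {E : Type*} [NormedAddCommGroup E] [InnerProductSpace ℝ E]

/-- For a unit vector `v`, the vector from `x` to its orthogonal projection on the hyperplane
`{y | ⟪y, v⟫ = t}`; for general `v` it has been scaled by `‖v‖ ^ 2` to avoid a division. -/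
def toHyperplane (v : E) (t : ℝ) (x : E) : E := (t - ⟪x, v⟫_ℝ) • v

theorem inner_toHyperplane (v : E) (t : ℝ) (x u : E) :
    ⟪u, toHyperplane v t x⟫_ℝ = (t - ⟪x, v⟫_ℝ) * ⟪u, v⟫_ℝ :=
  real_inner_smul_right u v _

theorem exists_inner_add_smul_eq_of_inner_toHyperplane_nonneg {v x u : E} {t : ℝ}
    (hne : ⟪u, v⟫_ℝ ≠ 0) (h : 0 ≤ ⟪u, toHyperplane v t x⟫_ℝ) :
    ∃ s : ℝ, 0 ≤ s ∧ ⟪x + s • u, v⟫_ℝ = t := by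
  refine ⟨(t - ⟪x, v⟫_ℝ) / ⟪u, v⟫_ℝ, ?_, ?_⟩
  · rw [inner_toHyperplane] at h
    exact (mul_div_mul_right (t - ⟪x, v⟫_ℝ) _ hne).subst (div_nonneg h (mul_self_nonneg _))
  · rw [inner_add_left, real_inner_smul_left, div_mul_cancel₀ _ hne, add_sub_cancel]

variable [FiniteDimensional ℝ E] [MeasurableSpace E] [BorelSpace E] {Ω : Type*} [MeasurableSpace Ω]
  {P : Measure Ω} {V : Ω → E} {T : Ω → ℝ}

theorem upperSemicontinuous_measure_inner_toHyperplane_nonneg [IsFiniteMeasure P]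
    (hV : AEMeasurable V P) (hT : AEMeasurable T P) (u : E) :
    UpperSemicontinuous fun x => P {ω | 0 ≤ ⟪u, toHyperplane (V ω) (T ω) x⟫_ℝ} := by
  refine upperSemicontinuous_measure_preimage
    (f := fun x ω => ⟪u, toHyperplane (V ω) (T ω) x⟫_ℝ) isClosed_Ici (fun ω => ?_) fun x => ?_
  · simp_rw [inner_toHyperplane]
    fun_prop
  · simp_rw [inner_toHyperplane]
    exact (AEMeasurable.nullMeasurable (by fun_prop)) measurableSet_Ici

theorem eventually_measure_inner_toHyperplane_nonneg_lt [IsFiniteMeasure P]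
    (hV : AEMeasurable V P) (hT : AEMeasurable T P) (hnull : ∀ u ≠ 0, P {ω | ⟪u, V ω⟫_ℝ = 0} = 0)
    {c : ℝ≥0∞} (hc : 0 < c) :
    ∀ᶠ x in Bornology.cobounded E, P {ω | 0 ≤ ⟪x, toHyperplane (V ω) (T ω) x⟫_ℝ} < c := by
  let q : ℝ × E → Ω → ℝ := fun z ω => (z.1 * T ω - ⟪z.2, V ω⟫_ℝ) * ⟪z.2, V ω⟫_ℝ
  have husc : UpperSemicontinuous fun z => P (q z ⁻¹' Ici 0) :=
    upperSemicontinuous_measure_preimage isClosed_Ici (fun ω => by fun_prop) fun z =>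
      AEMeasurable.nullMeasurable (by fun_prop) measurableSet_Ici
  have hinfty : ∀ e : E, ‖e‖ = 1 → P (q (0, e) ⁻¹' Ici 0) < c := by
    intro e he
    have he0 : e ≠ 0 := norm_ne_zero_iff.1 (he ▸ one_ne_zero)
    refine (measure_mono fun ω hω => ?_).trans_lt ((hnull e he0).trans_lt hc)
    have hω' : 0 ≤ (0 * T ω - ⟪e, V ω⟫_ℝ) * ⟪e, V ω⟫_ℝ := hω
    exact mul_self_eq_zero.1 (le_antisymm (by linarith) (mul_self_nonneg _))
  have hunif : ∀ᶠ δ in 𝓝 (0 : ℝ), ∀ e ∈ Metric.sphere (0 : E) 1, P (q (δ, e) ⁻¹' Ici 0) < c :=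
    (isCompact_sphere 0 1).eventually_forall_of_forall_eventually fun e he =>
      husc (0, e) c (hinfty e (mem_sphere_zero_iff_norm.1 he))
  filter_upwards [(tendsto_inv_atTop_zero.comp tendsto_norm_cobounded_atTop).eventually hunif,
    eventually_cobounded_le_norm (1 : ℝ)] with x hx hx1
  have hxpos : 0 < ‖x‖ := one_pos.trans_le hx1
  convert hx (‖x‖⁻¹ • x) (by simp [norm_smul, hxpos.ne']) using 2
  ext ω
  have hscale : q (‖x‖⁻¹, ‖x‖⁻¹ • x) ω = ‖x‖⁻¹ ^ 2 * ⟪x, toHyperplane (V ω) (T ω) x⟫_ℝ := by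
    simp only [q, inner_toHyperplane, real_inner_smul_left]
    ring
  simp [hscale, hxpos]

theorem dual_central_point_measure_general [IsProbabilityMeasure P] (hV : AEMeasurable V P)
    (hT : AEMeasurable T P) (hnull : ∀ u ≠ 0, P {ω | ⟪u, V ω⟫_ℝ = 0} = 0) :
    ∃ x : E, ∀ u ≠ 0, 1 / ((finrank ℝ E : ℝ≥0∞) + 1) ≤
      P {ω | ∃ s : ℝ, 0 ≤ s ∧ ⟪x + s • u, V ω⟫_ℝ = T ω} := by
  rw [← Nat.cast_add_one]
  obtain ⟨x, hx⟩ := exists_eq_empty_of_zero_notMem_convexHull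
    (fun u => (upperSemicontinuous_measure_inner_toHyperplane_nonneg hV hT u).isOpen_preimage _)
    (fun x => zero_notMem_convexHull_setOf_measure_lt fun ω => toHyperplane (V ω) (T ω) x)
    (eventually_measure_inner_toHyperplane_nonneg_lt hV hT hnull (by simp))
  refine ⟨x, fun u hu => (not_lt.1 (eq_empty_iff_forall_notMem.1 hx u)).trans
    (measure_mono_ae ?_)⟩
  filter_upwards [measure_eq_zero_iff_ae_notMem.1 (hnull u hu)] with ω hω
  exact exists_inner_add_smul_eq_of_inner_toHyperplane_nonneg hω

end RandomHyperplane

theorem toSphere_preimage_submodule_eq_zero {E : Type*} [NormedAddCommGroup E] [NormedSpace ℝ E]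
    [FiniteDimensional ℝ E] [MeasurableSpace E] [BorelSpace E] (μ : Measure E)
    [μ.IsAddHaarMeasure] {p : Submodule ℝ E} (hp : p ≠ ⊤) :
    μ.toSphere ((↑) ⁻¹' (p : Set E)) = 0 := by
  have hmeas : MeasurableSet ((↑) ⁻¹' (p : Set E) : Set (Metric.sphere (0 : E) 1)) :=
    p.closed_of_finiteDimensional.measurableSet.preimage measurable_subtype_coe
  have hcone : Ioo (0 : ℝ) 1 • ((↑) '' ((↑) ⁻¹' (p : Set E) : Set (Metric.sphere (0 : E) 1))) ⊆
      (p : Set E) := by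
    rintro _ ⟨a, -, _, ⟨v, hv, rfl⟩, rfl⟩
    exact p.smul_mem a hv
  rw [Measure.toSphere_apply' _ hmeas, measure_mono_null hcone (Measure.addHaar_submodule μ p hp),
    mul_zero]

theorem toSphere_setOf_inner_eq_zero {E : Type*} [NormedAddCommGroup E] [InnerProductSpace ℝ E]
    [FiniteDimensional ℝ E] [MeasurableSpace E] [BorelSpace E] (μ : Measure E)
    [μ.IsAddHaarMeasure] {u : E} (hu : u ≠ 0) :
    μ.toSphere {v | ⟪u, v⟫_ℝ = 0} = 0 := by
  have hne : (ℝ ∙ u)ᗮ ≠ ⊤ := by simpa using hu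
  simpa [preimage, Submodule.mem_orthogonal_singleton_iff_inner_right] using
    toSphere_preimage_submodule_eq_zero μ hne

theorem measure_setOf_inner_fst_eq_zero {E Y : Type*} [NormedAddCommGroup E]
    [InnerProductSpace ℝ E] [FiniteDimensional ℝ E] [MeasurableSpace E] [BorelSpace E]
    [MeasurableSpace Y] {ν : Measure E} [ν.IsAddHaarMeasure] {ρ : Measure Y}
    {μ : Measure (Metric.sphere (0 : E) 1 × Y)} (hμ : μ ≪ ν.toSphere.prod ρ) {u : E} (hu : u ≠ 0) :
    μ {p | ⟪u, p.1⟫_ℝ = 0} = 0 :=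
  hμ (Measure.quasiMeasurePreserving_fst.preimage_null (toSphere_setOf_inner_eq_zero ν hu))

theorem hypOf_inter_ray_nonempty_iff {d : ℕ} {v : Metric.sphere (0 : EuclideanSpace ℝ (Fin d)) 1}
    {t : ℝ} {x u : EuclideanSpace ℝ (Fin d)} : (HypOf v t ∩ Ray x u).Nonempty ↔
      ∃ s : ℝ, 0 ≤ s ∧ ⟪x + s • u, (v : EuclideanSpace ℝ (Fin d))⟫_ℝ = t := by
  constructor
  · rintro ⟨_, hy, s, hs, rfl⟩
    exact ⟨s, hs, hy⟩
  · rintro ⟨s, hs, hst⟩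
    exact ⟨_, hst, s, hs, rfl⟩

/-- The dual central point theorem for measures: if `μ` is a compactly supported
probability measure on the space `S^{d-1} × ℝ` of (parameterized) affine hyperplanes
in `ℝ^d`, absolutely continuous with respect to the product of the surface measure on
the sphere and Lebesgue measure, and invariant under `(v,t) ↦ (-v,-t)`, then there is
a point `x` such that every ray starting at `x` meets a set of hyperplanes of
`μ`-measure at least `1/(d+1)`. -/
theorem dual_central_point_measure (d : ℕ) (hd : 1 ≤ d)
    (μ : Measure (Metric.sphere (0 : EuclideanSpace ℝ (Fin d)) 1 × ℝ))
    [IsProbabilityMeasure μ]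
    (hac : μ ≪ ((volume : Measure (EuclideanSpace ℝ (Fin d))).toSphere.prod volume))
    (hinv : μ.map (fun p => (-p.1, -p.2)) = μ)
    (hsupp : ∃ K : Set (Metric.sphere (0 : EuclideanSpace ℝ (Fin d)) 1 × ℝ),
      IsCompact K ∧ μ Kᶜ = 0) :
    ∃ x : EuclideanSpace ℝ (Fin d), ∀ u : EuclideanSpace ℝ (Fin d), ‖u‖ = 1 →
      1 / ((d : ℝ≥0∞) + 1) ≤ μ {p | (HypOf p.1 p.2 ∩ Ray x u).Nonempty} := by
  obtain ⟨x, hx⟩ := dual_central_point_measure_general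
    (measurable_subtype_coe.comp measurable_fst).aemeasurable measurable_snd.aemeasurable
    fun _ => measure_setOf_inner_fst_eq_zero hac
  exact ⟨x, fun u hu => by
    simpa [hypOf_inter_ray_nonempty_iff] using hx u (norm_ne_zero_iff.1 (hu ▸ one_ne_zero))⟩
end

section
/- Let n ≥ 1 and consider a family of 3n straight lines in general position in the plane ℝ² (no two parallel, no three concurrent). Then the family can be partitioned into n triples such that the n triangles formed by the triples (each triangle being the convex hull of the three pairwise intersection points of the lines of a triple) have a point in common. -/
open scoped InnerProductSpace

/-- A line in the plane `ℝ²`: the solution set of one nontrivial linear equation. -/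
def IsLine (l : Set (EuclideanSpace ℝ (Fin 2))) : Prop :=
  ∃ (v : EuclideanSpace ℝ (Fin 2)) (c : ℝ), v ≠ 0 ∧ l = {y | ⟪y, v⟫_ℝ = c}

/-!
Choose linear coordinates in which every line is the graph of an affine function, and split the
lines into thirds `A`, `B`, `C` of increasing slope. The midpoint of the two middle heights of the
`2n` lines in `A ∪ B` is a continuous function of the abscissa, and so is that of `B ∪ C`. Far to
the right the first lies below every line of `B` and the second above, far to the left it is the
other way round, so the two functions agree somewhere. The resulting point has as many lines of
`A ∪ B` below it as above, and likewise for `B ∪ C`. Since at most two lines pass through it, a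
parity argument lets one distribute these over the two sides so that as many lines of `A` as of `C`
are below it and equally many lines of `B` are above it. Grouping the lines accordingly, each triple
alternates in order of slope between the two sides of the point, which puts the point in its
triangle.
-/

section InnerMedian

open Finset OrderDual

/-- `v` lies in the relative interior of the interval of medians of the values `y i`. For an even
number `2k` of values, this means that `v` lies strictly between the `k`-th and the `(k + 1)`-st
smallest value, or that all three coincide. -/
def IsInnerMedian {ι α : Type*} [Fintype ι] [LinearOrder α] (y : ι → α) (v : α) : Prop :=
  Fintype.card ι ≤ 2 * #{i | y i < v} ↔ Fintype.card ι ≤ 2 * #{i | v < y i}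

variable {ι κ α : Type*} [Fintype ι] [Fintype κ] [LinearOrder α]

-- The order statistic is written as a minimum over `k`-subsets of maxima, so that its continuity
-- is inherited from the lattice operations.
lemma exists_continuous_orderStat [TopologicalSpace α] [OrderClosedTopology α] {k : ℕ}
    (hk : 0 < k) (hkι : k ≤ Fintype.card ι) :
    ∃ q : (ι → α) → α, Continuous q ∧ ∀ y v, q y < v ↔ k ≤ #{i | y i < v} := by
  let 𝒮 := powersetCard k (univ : Finset ι)
  have h𝒮 : 𝒮.attach.Nonempty := attach_nonempty_iff.2 (powersetCard_nonempty.2 hkι)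
  have hcard (S : 𝒮) : #S.1 = k := (mem_powersetCard.1 S.2).2
  have hne (S : 𝒮) : S.1.Nonempty := card_pos.1 (hk.trans_eq (hcard S).symm)
  refine ⟨fun y => 𝒮.attach.inf' h𝒮 fun S => S.1.sup' (hne S) y, ?_, fun y v => ?_⟩
  · exact Continuous.finset_inf'_apply _ fun S _ =>
      Continuous.finset_sup'_apply _ fun i _ => continuous_apply i
  · simp only [inf'_lt_iff, sup'_lt_iff]
    constructor
    · rintro ⟨S, -, hS⟩
      exact (hcard S).symm.le.trans (card_le_card fun i hi => (mem_filter_univ i).2 (hS i hi))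
    · intro h
      obtain ⟨S, hSsub, hScard⟩ := exists_subset_card_eq h
      exact ⟨⟨S, mem_powersetCard.2 ⟨subset_univ S, hScard⟩⟩, mem_attach _ _,
        fun i hi => (mem_filter_univ i).1 (hSsub hi)⟩

lemma exists_continuous_isInnerMedian [Nonempty ι] :
    ∃ m : (ι → ℝ) → ℝ, Continuous m ∧ ∀ y, IsInnerMedian y (m y) := by
  have hpos : 0 < Fintype.card ι := Fintype.card_pos
  obtain ⟨q, hq, hqlt⟩ := exists_continuous_orderStat (ι := ι) (α := ℝ)
    (k := (Fintype.card ι + 1) / 2) (by lia) (by lia)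
  -- Negation turns the lower median `q` into the upper one.
  refine ⟨fun y => (q y - q (-y)) / 2, by fun_prop, fun y => ?_⟩
  set v := (q y - q (-y)) / 2 with hv
  have hlower := hqlt y v
  have hupper := hqlt (-y) (-v)
  have hmid : q y < v ↔ q (-y) < -v := by constructor <;> intro h <;> linarith
  simp only [Pi.neg_apply, neg_lt_neg_iff] at hupper
  unfold IsInnerMedian
  rw [hlower, hupper] at hmid
  lia

lemma isInnerMedian_comp_equiv (e : κ ≃ ι) {y : ι → α} {v : α} :
    IsInnerMedian (y ∘ e) v ↔ IsInnerMedian y v := by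
  have hlt : #{i | y (e i) < v} = #{i | y i < v} := card_bijective e e.bijective (by simp)
  have hgt : #{i | v < y (e i)} = #{i | v < y i} := card_bijective e e.bijective (by simp)
  simp only [IsInnerMedian, Function.comp_apply, hlt, hgt, Fintype.card_congr e]

lemma isInnerMedian_sumElim_comm {y : ι → α} {z : κ → α} {v : α} :
    IsInnerMedian (Sum.elim y z) v ↔ IsInnerMedian (Sum.elim z y) v := by
  have hcomm : Sum.elim z y ∘ Equiv.sumComm ι κ = Sum.elim y z := by ext (_ | _) <;> rfl
  rw [← isInnerMedian_comp_equiv (Equiv.sumComm ι κ), hcomm]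

lemma card_filter_lt_add_card_filter_eq (y : ι → α) (v : α) :
    #{i | y i < v} + #{i | y i = v} = #{i | y i ≤ v} := by
  classical
  rw [← card_union_of_disjoint (disjoint_filter.2 fun i _ => ne_of_lt), ← filter_or]
  simp only [le_iff_lt_or_eq]

lemma card_filter_gt_add_card_filter_eq (y : ι → α) (v : α) :
    #{i | v < y i} + #{i | y i = v} = #{i | v ≤ y i} := by
  simpa using card_filter_lt_add_card_filter_eq (toDual ∘ y) (toDual v)

lemma card_filter_lt_add_card_filter_eq_add_card_filter_gt (y : ι → α) (v : α) :
    #{i | y i < v} + #{i | y i = v} + #{i | v < y i} = Fintype.card ι := by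
  simpa only [card_filter_lt_add_card_filter_eq, not_le, card_univ] using
    card_filter_add_card_filter_not (s := univ) (fun i => y i ≤ v)

lemma IsInnerMedian.card_filter_lt_eq_card_filter_gt {y : ι → α} {v : α} (h : IsInnerMedian y v)
    (heven : Even (Fintype.card ι)) (heq : #{i | y i = v} ≤ 2) :
    #{i | y i < v} = #{i | v < y i} := by
  have htotal := card_filter_lt_add_card_filter_eq_add_card_filter_gt y v
  obtain ⟨k, hk⟩ := heven
  unfold IsInnerMedian at h
  lia

lemma card_filter_sumElim {β : Type*} (y : ι → β) (z : κ → β) (p : β → Prop) [DecidablePred p] :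
    #{i | p (Sum.elim y z i)} = #{i | p (y i)} + #{i | p (z i)} := by
  simp only [card_filter, Fintype.sum_sum_type, Sum.elim_inl, Sum.elim_inr]
  rfl

lemma IsInnerMedian.card_filter_lt_add_eq_card_filter_gt_add {y : ι → α} {z : κ → α} {v : α}
    (h : IsInnerMedian (Sum.elim y z) v) (hcard : Fintype.card ι = Fintype.card κ)
    (heq : #{i | y i = v} + #{i | z i = v} ≤ 2) :
    #{i | y i < v} + #{i | z i < v} = #{i | v < y i} + #{i | v < z i} := by
  simpa only [card_filter_sumElim _ _ (· < v), card_filter_sumElim _ _ (v < ·)] using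
    h.card_filter_lt_eq_card_filter_gt (by simp [hcard])
      (by rwa [card_filter_sumElim _ _ (· = v)])

lemma IsInnerMedian.lt_of_forall_lt {y : ι → α} {z : κ → α} {v : α}
    (h : IsInnerMedian (Sum.elim y z) v) (hcard : Fintype.card ι = Fintype.card κ)
    (hyz : ∀ i j, y i < z j) (j : κ) : v < z j := by
  by_contra! hjv
  have hy : ∀ i, y i < v := fun i => (hyz i j).trans_le hjv
  have hylt : #{i | y i < v} = Fintype.card ι := by simp [hy]
  have hygt : #{i | v < y i} = 0 := by simp [fun i => (hy i).le]
  have hzgt : #{i | v < z i} < Fintype.card κ :=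
    card_lt_univ_of_notMem (x := j) (by simpa using hjv)
  rw [IsInnerMedian, Fintype.card_sum, card_filter_sumElim _ _ (· < v),
    card_filter_sumElim _ _ (v < ·)] at h
  lia

lemma IsInnerMedian.gt_of_forall_lt {y : ι → α} {z : κ → α} {v : α}
    (h : IsInnerMedian (Sum.elim y z) v) (hcard : Fintype.card ι = Fintype.card κ)
    (hyz : ∀ i j, y i < z j) (i : ι) : y i < v := by
  have hdual : IsInnerMedian (Sum.elim (toDual ∘ z) (toDual ∘ y)) (toDual v) := by
    rw [isInnerMedian_sumElim_comm, ← Sum.comp_elim]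
    exact Iff.symm h
  exact hdual.lt_of_forall_lt hcard.symm (fun j i => hyz i j) i

lemma exists_common_isInnerMedian {X : Type*} [TopologicalSpace X] [PreconnectedSpace X]
    [Nonempty κ] {f : Fin 3 → κ → X → ℝ} (hf : ∀ s i, Continuous (f s i)) {x₁ x₂ : X}
    (h₁ : ∀ s t, s < t → ∀ i j, f s i x₁ < f t j x₁)
    (h₂ : ∀ s t, s < t → ∀ i j, f t j x₂ < f s i x₂) :
    ∃ x v, IsInnerMedian (Sum.elim (f 0 · x) (f 1 · x)) v ∧
      IsInnerMedian (Sum.elim (f 1 · x) (f 2 · x)) v := by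
  obtain ⟨m, hm, hmed⟩ := exists_continuous_isInnerMedian (ι := κ ⊕ κ)
  let μ (s t : Fin 3) (x : X) : ℝ := m (Sum.elim (f s · x) (f t · x))
  have hμ (s t : Fin 3) : Continuous (μ s t) :=
    hm.comp <| continuous_pi <| Sum.rec (hf s) (hf t)
  have hμmed (s t : Fin 3) (x : X) : IsInnerMedian (Sum.elim (f s · x) (f t · x)) (μ s t x) :=
    hmed _
  have hμmed' (s t : Fin 3) (x : X) : IsInnerMedian (Sum.elim (f t · x) (f s · x)) (μ s t x) :=
    isInnerMedian_sumElim_comm.1 (hμmed s t x)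
  obtain ⟨j⟩ := ‹Nonempty κ›
  have hx₁ : μ 0 1 x₁ < μ 1 2 x₁ :=
    ((hμmed 0 1 x₁).lt_of_forall_lt rfl (h₁ 0 1 (by decide)) j).trans
      ((hμmed 1 2 x₁).gt_of_forall_lt rfl (h₁ 1 2 (by decide)) j)
  have hx₂ : μ 1 2 x₂ < μ 0 1 x₂ :=
    ((hμmed' 1 2 x₂).lt_of_forall_lt rfl (fun i k => h₂ 1 2 (by decide) k i) j).trans
      ((hμmed' 0 1 x₂).gt_of_forall_lt rfl (fun i k => h₂ 0 1 (by decide) k i) j)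
  obtain ⟨x, hx⟩ := intermediate_value_univ₂ (hμ 0 1) (hμ 1 2) hx₁.le hx₂.le
  exact ⟨x, μ 0 1 x, hμmed 0 1 x, hx ▸ hμmed 1 2 x⟩

end InnerMedian

section Alternating

open Finset

/-- The three heights `y 0, y 1, y 2` lie alternately on the two (closed) sides of `v`. For three
lines in order of slope, evaluated at a common abscissa, this says that the point at height `v`
belongs to their triangle. -/
def IsAlternating {α : Type*} [LE α] (y : Fin 3 → α) (v : α) : Prop :=
  (y 0 ≤ v ∧ v ≤ y 1 ∧ y 2 ≤ v) ∨ (v ≤ y 0 ∧ y 1 ≤ v ∧ v ≤ y 2)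

variable {α : Type*} [LinearOrder α] {n : ℕ}

-- Balancedness forces the three numbers of lines through `v` to have the same parity, so all are
-- even: half of each may be counted as lying below `v`, the other half as lying above.
lemma isAlternating_of_sorted {y : Fin 3 → Fin n → α} {v : α}
    (hy₀ : Monotone (y 0)) (hy₁ : Antitone (y 1)) (hy₂ : Monotone (y 2))
    (h₀₁ : IsInnerMedian (Sum.elim (y 0) (y 1)) v) (h₁₂ : IsInnerMedian (Sum.elim (y 1) (y 2)) v)
    (heq : #{p : Fin 3 × Fin n | y p.1 p.2 = v} ≤ 2) (j : Fin n) :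
    IsAlternating (y · j) v := by
  have heq' : #{i | y 0 i = v} + #{i | y 1 i = v} + #{i | y 2 i = v} ≤ 2 := by
    simpa only [card_filter, Fintype.sum_prod_type, Fin.sum_univ_three] using heq
  have htotal (s : Fin 3) : #{i | y s i < v} + #{i | y s i = v} + #{i | v < y s i} = n := by
    simpa using card_filter_lt_add_card_filter_eq_add_card_filter_gt (y s) v
  have htotal₀ := htotal 0
  have htotal₁ := htotal 1
  have htotal₂ := htotal 2
  have hbalance₀₁ := h₀₁.card_filter_lt_add_eq_card_filter_gt_add rfl (by lia)
  have hbalance₁₂ := h₁₂.card_filter_lt_add_eq_card_filter_gt_add rfl (by lia)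
  have hlt₀ := Tuple.lt_card_lt_iff_apply_lt_of_monotone (a := v) (j := j) hy₀
  have hgt₁ := Tuple.lt_card_gt_iff_apply_gt_of_antitone (a := v) (j := j) hy₁
  have hlt₂ := Tuple.lt_card_lt_iff_apply_lt_of_monotone (a := v) (j := j) hy₂
  have hle₀ := Tuple.lt_card_le_iff_apply_le_of_monotone (a := v) (j := j) hy₀
  have hge₁ := Tuple.lt_card_ge_iff_apply_ge_of_antitone (a := v) (j := j) hy₁
  have hle₂ := Tuple.lt_card_le_iff_apply_le_of_monotone (a := v) (j := j) hy₂
  rw [← card_filter_lt_add_card_filter_eq] at hle₀ hle₂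
  rw [← card_filter_gt_add_card_filter_eq] at hge₁
  unfold IsAlternating
  rcases lt_or_ge j.1 (#{i | y 0 i < v} + #{i | y 0 i = v} / 2) with hj | hj
  · exact .inl ⟨hle₀.1 (by lia), hge₁.1 (by lia), hle₂.1 (by lia)⟩
  · exact .inr ⟨not_lt.1 (mt hlt₀.2 (by lia)), not_lt.1 (mt hgt₁.2 (by lia)),
      not_lt.1 (mt hlt₂.2 (by lia))⟩

lemma exists_perm_isAlternating {y : Fin 3 → Fin n → α} {v : α}
    (h₀₁ : IsInnerMedian (Sum.elim (y 0) (y 1)) v) (h₁₂ : IsInnerMedian (Sum.elim (y 1) (y 2)) v)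
    (heq : #{p : Fin 3 × Fin n | y p.1 p.2 = v} ≤ 2) :
    ∃ π : Fin 3 → Equiv.Perm (Fin n), ∀ j, IsAlternating (fun s => y s (π s j)) v := by
  let π : Fin 3 → Equiv.Perm (Fin n) :=
    ![Tuple.sort (y 0), Fin.revPerm.trans (Tuple.sort (y 1)), Tuple.sort (y 2)]
  have hperm (s t : Fin 3) (h : IsInnerMedian (Sum.elim (y s) (y t)) v) :
      IsInnerMedian (Sum.elim (y s ∘ π s) (y t ∘ π t)) v := by
    rw [← Sum.elim_comp_map]
    exact (isInnerMedian_comp_equiv (Equiv.sumCongr (π s) (π t))).2 h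
  refine ⟨π, fun j => isAlternating_of_sorted (y := fun s => y s ∘ π s) (Tuple.monotone_sort _) ?_
    (Tuple.monotone_sort _) (hperm 0 1 h₀₁) (hperm 1 2 h₁₂) ?_ j⟩
  · exact (Tuple.monotone_sort (y 1)).comp_antitone Fin.rev_anti
  · let e := Equiv.prodShear (Equiv.refl (Fin 3)) π
    exact (card_bijective e e.bijective fun p => by simp [e]).trans_le heq

end Alternating

section GeneralPosition

open Finset

/-- A family of subsets of the plane (in practice, of lines) is in general position if any two of
them have exactly one common point and no three of them have a common point. -/
def InGeneralPosition {ι V : Type*} (L : ι → Set V) : Prop :=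
  (∀ i j, i ≠ j → ∃! x, x ∈ L i ∧ x ∈ L j) ∧
    ∀ i j k, i ≠ j → j ≠ k → i ≠ k → ¬ ∃ x, x ∈ L i ∧ x ∈ L j ∧ x ∈ L k

/-- The points in which two members of a family of lines cross. For three lines in general
position, the convex hull of this set is their triangle. -/
def crossings {ι V : Type*} (L : ι → Set V) : Set V :=
  {p | ∃ i j, i ≠ j ∧ p ∈ L i ∧ p ∈ L j}

/-- The family `L` can be partitioned into `n` triples whose triangles have a common point. The
triples are the fibers of the labeling `c`. -/
def HasTverbergPartition {ι V : Type*} [AddCommGroup V] [Module ℝ V] (n : ℕ) (L : ι → Set V) :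
    Prop :=
  ∃ c : ι → Fin n, (∀ m, {i | c i = m}.ncard = 3) ∧
    ∃ x, ∀ m, x ∈ convexHull ℝ {p | ∃ i j, i ≠ j ∧ c i = m ∧ c j = m ∧ p ∈ L i ∧ p ∈ L j}

variable {ι V W : Type*}

lemma InGeneralPosition.preimage {L : ι → Set W} (hL : InGeneralPosition L) {f : V → W}
    (hf : f.Bijective) : InGeneralPosition fun i => f ⁻¹' L i :=
  ⟨fun i j hij => hf.existsUnique_iff.1 (hL.1 i j hij),
    fun i j k hij hjk hik h => hL.2 i j k hij hjk hik (hf.surjective.exists.2 h)⟩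

lemma InGeneralPosition.card_filter_mem_le_two [Fintype ι] {L : ι → Set V}
    (hL : InGeneralPosition L) (x : V) [DecidablePred (x ∈ L ·)] :
    #{i | x ∈ L i} ≤ 2 := by
  by_contra! h
  obtain ⟨i, hi, j, hj, k, hk, hij, hik, hjk⟩ := two_lt_card.1 h
  simp only [mem_filter_univ] at hi hj hk
  exact hL.2 i j k hij hjk hik ⟨x, hi, hj, hk⟩

variable [AddCommGroup V] [Module ℝ V] [AddCommGroup W] [Module ℝ W] {n : ℕ}

lemma hasTverbergPartition_of_equiv {L : ι → Set V} (F : Fin 3 × Fin n ≃ ι) {x : V}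
    (hx : ∀ m, x ∈ convexHull ℝ (crossings fun s => L (F (s, m)))) :
    HasTverbergPartition n L := by
  refine ⟨fun i => (F.symm i).2, fun m => ?_, x, fun m => convexHull_mono ?_ (hx m)⟩
  · have hfiber : {i | (F.symm i).2 = m} = Set.range fun s => F (s, m) := by
      ext i
      obtain ⟨⟨s, k⟩, rfl⟩ := F.surjective i
      simp [eq_comm]
    have hinj : Function.Injective fun s => F (s, m) :=
      F.injective.comp (Prod.mk_left_injective m)
    rw [hfiber, ← Set.image_univ, Set.ncard_image_of_injective _ hinj, Set.ncard_univ, Nat.card_fin]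
  · rintro p ⟨s, t, hst, hps, hpt⟩
    exact ⟨F (s, m), F (t, m), by simpa using hst, by simp, by simp, hps, hpt⟩

lemma HasTverbergPartition.of_preimage {L : ι → Set W} (Φ : V ≃ₗ[ℝ] W)
    (h : HasTverbergPartition n fun i => Φ ⁻¹' L i) : HasTverbergPartition n L := by
  obtain ⟨c, hc, x, hx⟩ := h
  refine ⟨c, hc, Φ x, fun m => ?_⟩
  have himage := Set.mem_image_of_mem Φ.toLinearMap (hx m)
  rw [LinearMap.image_convexHull] at himage
  refine convexHull_mono ?_ himage
  rintro _ ⟨p, ⟨i, j, hij, hi, hj, hpi, hpj⟩, rfl⟩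
  exact ⟨i, j, hij, hi, hj, hpi, hpj⟩

end GeneralPosition

section GraphLine

open Finset

/-- The graph of the affine function `x ↦ a * x + b`, that is, the nonvertical line of slope `a`
and intercept `b`. -/
def graphLine (a b : ℝ) : Set (ℝ × ℝ) :=
  {p | a * p.1 + b = p.2}

lemma mem_graphLine {a b : ℝ} {p : ℝ × ℝ} : p ∈ graphLine a b ↔ a * p.1 + b = p.2 :=
  Iff.rfl

lemma exists_mem_graphLine_inter {a a' : ℝ} (h : a ≠ a') (b b' : ℝ) :
    ∃ p, p ∈ graphLine a b ∧ p ∈ graphLine a' b' := by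
  have hsub : a - a' ≠ 0 := sub_ne_zero.2 h
  refine ⟨((b' - b) / (a - a'), a * ((b' - b) / (a - a')) + b), rfl, ?_⟩
  rw [mem_graphLine]
  field_simp
  ring

lemma slope_ne_of_existsUnique {a b a' b' : ℝ}
    (h : ∃! p, p ∈ graphLine a b ∧ p ∈ graphLine a' b') : a ≠ a' := by
  rintro rfl
  obtain ⟨p, ⟨hp, hp'⟩, hunique⟩ := h
  rw [mem_graphLine] at hp hp'
  have hshift := hunique (p.1 + 1, p.2 + a)
    ⟨by rw [mem_graphLine]; linear_combination hp, by rw [mem_graphLine]; linear_combination hp'⟩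
  simpa using congrArg Prod.fst hshift

lemma exists_forall_affine_lt {ι : Type*} [Finite ι] (a b : ι → ℝ) :
    ∃ x, ∀ i j, a i < a j → a i * x + b i < a j * x + b j := by
  suffices h : ∀ᶠ x in Filter.atTop, ∀ i j, a i < a j → a i * x + b i < a j * x + b j from h.exists
  simp only [Filter.eventually_all]
  intro i j hij
  filter_upwards [Filter.eventually_gt_atTop ((b i - b j) / (a j - a i))] with x hx
  rw [div_lt_iff₀ (sub_pos.2 hij)] at hx
  linarith

lemma mem_convexHull_of_sum_smul_eq {ι V : Type*} [Fintype ι] [AddCommGroup V] [Module ℝ V]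
    {S : Set V} {w : ι → ℝ} {z : ι → V} {p : V} (hsign : 0 ≤ w ∨ w ≤ 0) (hw : w ≠ 0)
    (hz : ∀ i, z i ∈ S) (hp : ∑ i, w i • z i = (∑ i, w i) • p) : p ∈ convexHull ℝ S := by
  wlog hnonneg : 0 ≤ w generalizing w
  · exact this (.inl (neg_nonneg.2 (hsign.resolve_left hnonneg))) (neg_ne_zero.2 hw)
      (by simpa using hp) (neg_nonneg.2 (hsign.resolve_left hnonneg))
  have hpos : 0 < ∑ i, w i := Fintype.sum_pos (lt_of_le_of_ne hnonneg hw.symm)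
  have hcenter : univ.centerMass w z = p := (inv_smul_eq_iff₀ hpos.ne').2 hp
  exact hcenter ▸ univ.centerMass_mem_convexHull (fun i _ => hnonneg i) hpos fun i _ => hz i

-- The weight of a vertex is the signed vertical distance from `p` to the opposite line, scaled by
-- the difference of the slopes of the two lines through the vertex.
lemma mem_convexHull_crossings_of_isAlternating {a b : Fin 3 → ℝ} {p : ℝ × ℝ} (ha : StrictMono a)
    (hp : ∃ s, p ∉ graphLine (a s) (b s)) (h : IsAlternating (fun s => a s * p.1 + b s) p.2) :
    p ∈ convexHull ℝ (crossings fun s => graphLine (a s) (b s)) := by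
  have h₀₁ : 0 < a 1 - a 0 := sub_pos.2 (ha (by decide))
  have h₀₂ : 0 < a 2 - a 0 := sub_pos.2 (ha (by decide))
  have h₁₂ : 0 < a 2 - a 1 := sub_pos.2 (ha (by decide))
  have hcross {s t : Fin 3} (hst : s ≠ t) :=
    exists_mem_graphLine_inter (ha.injective.ne hst) (b s) (b t)
  obtain ⟨p₁₂, hp₁₂, hp₁₂'⟩ := hcross (s := 1) (t := 2) (by decide)
  obtain ⟨p₀₂, hp₀₂, hp₀₂'⟩ := hcross (s := 0) (t := 2) (by decide)
  obtain ⟨p₀₁, hp₀₁, hp₀₁'⟩ := hcross (s := 0) (t := 1) (by decide)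
  let r (s : Fin 3) : ℝ := p.2 - (a s * p.1 + b s)
  refine mem_convexHull_of_sum_smul_eq
    (w := ![(a 2 - a 1) * r 0, (a 2 - a 0) * -r 1, (a 1 - a 0) * r 2]) (z := ![p₁₂, p₀₂, p₀₁])
    ?_ ?_ ?_ ?_
  · have hr : (0 ≤ r 0 ∧ r 1 ≤ 0 ∧ 0 ≤ r 2) ∨ (r 0 ≤ 0 ∧ 0 ≤ r 1 ∧ r 2 ≤ 0) := by
      simpa only [r, sub_nonneg, sub_nonpos, IsAlternating] using h
    simp only [Pi.le_def, Fin.forall_fin_succ]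
    refine hr.imp (fun ⟨hr₀, hr₁, hr₂⟩ => ?_) (fun ⟨hr₀, hr₁, hr₂⟩ => ?_)
    · exact ⟨mul_nonneg h₁₂.le hr₀, mul_nonneg h₀₂.le (neg_nonneg.2 hr₁),
        mul_nonneg h₀₁.le hr₂, nofun⟩
    · exact ⟨mul_nonpos_of_nonneg_of_nonpos h₁₂.le hr₀,
        mul_nonpos_of_nonneg_of_nonpos h₀₂.le (neg_nonpos.2 hr₁),
        mul_nonpos_of_nonneg_of_nonpos h₀₁.le hr₂, nofun⟩
  · contrapose! hp with hw
    have hr : ∀ s, r s = 0 := by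
      simpa [funext_iff, Fin.forall_fin_succ, h₀₁.ne', h₀₂.ne', h₁₂.ne'] using hw
    exact fun s => (sub_eq_zero.1 (hr s)).symm
  · simp only [Fin.forall_fin_succ]
    exact ⟨⟨1, 2, by decide, hp₁₂, hp₁₂'⟩, ⟨0, 2, by decide, hp₀₂, hp₀₂'⟩,
      ⟨0, 1, by decide, hp₀₁, hp₀₁'⟩, nofun⟩
  · rw [mem_graphLine] at hp₁₂ hp₁₂' hp₀₂ hp₀₂' hp₀₁ hp₀₁'
    ext <;> simp only [Fin.sum_univ_three, Matrix.cons_val, Prod.fst_add, Prod.snd_add,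
      Prod.smul_fst, Prod.smul_snd, smul_eq_mul]
    · linear_combination r 0 * (hp₁₂' - hp₁₂) - r 1 * (hp₀₂' - hp₀₂) + r 2 * (hp₀₁' - hp₀₁)
    · linear_combination r 0 * (a 1 * hp₁₂' - a 2 * hp₁₂) - r 1 * (a 0 * hp₀₂' - a 2 * hp₀₂) +
        r 2 * (a 0 * hp₀₁' - a 1 * hp₀₁)

end GraphLine

section Coordinates

/-- The linear coordinates on the plane in which a point `y` has abscissa `y 1 - t * y 0` and height
`y 0`, so that the vertical lines are those in direction `(1, t)`. -/
def shearCoordinates (t : ℝ) : (ℝ × ℝ) ≃ₗ[ℝ] EuclideanSpace ℝ (Fin 2) where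
  toFun p := !₂[p.2, p.1 + t * p.2]
  invFun y := (y 1 - t * y 0, y 0)
  map_add' p q := by ext s; fin_cases s <;> simp; ring
  map_smul' c p := by ext s; fin_cases s <;> simp; ring
  left_inv p := by simp
  right_inv y := by ext s; fin_cases s <;> simp

lemma exists_forall_add_mul_ne_zero {ι : Type*} [Finite ι] {p q : ι → ℝ}
    (h : ∀ i, p i ≠ 0 ∨ q i ≠ 0) : ∃ t, ∀ i, p i + t * q i ≠ 0 := by
  obtain ⟨t, ht⟩ := (Set.finite_range fun i => -p i / q i).infinite_compl.nonempty
  refine ⟨t, fun i hi => ht ⟨i, ?_⟩⟩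
  have hq : q i ≠ 0 := fun hq => (h i).elim (fun hp => hp (by simpa [hq] using hi)) (· hq)
  field_simp
  linear_combination -hi

lemma exists_linearEquiv_preimage_eq_graphLine {ι : Type*} [Finite ι]
    {L : ι → Set (EuclideanSpace ℝ (Fin 2))} (hL : ∀ i, IsLine (L i)) :
    ∃ (Φ : (ℝ × ℝ) ≃ₗ[ℝ] EuclideanSpace ℝ (Fin 2)) (a b : ι → ℝ),
      ∀ i, Φ ⁻¹' L i = graphLine (a i) (b i) := by
  choose w d hw hLw using hL
  have hw' (i : ι) : w i 0 ≠ 0 ∨ w i 1 ≠ 0 := by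
    contrapose! hw
    exact ⟨i, by ext s; fin_cases s; exacts [hw.1, hw.2]⟩
  obtain ⟨t, ht⟩ := exists_forall_add_mul_ne_zero hw'
  refine ⟨shearCoordinates t, fun i => -w i 1 / (w i 0 + t * w i 1),
    fun i => d i / (w i 0 + t * w i 1), fun i => ?_⟩
  ext p
  have hmem : p ∈ shearCoordinates t ⁻¹' L i ↔ p.2 * w i 0 + (p.1 + t * p.2) * w i 1 = d i := by
    simp [hLw, shearCoordinates, PiLp.inner_apply, Fin.sum_univ_two, mul_comm]
  rw [hmem, mem_graphLine, div_mul_eq_mul_div, ← add_div, div_eq_iff (ht i)]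
  constructor <;> intro h <;> linear_combination -h

end Coordinates

section Graphs

open Finset

lemma exists_equiv_forall_lt {α : Type*} [LinearOrder α] {k n : ℕ} {a : Fin (k * n) → α}
    (ha : a.Injective) :
    ∃ E : Fin k × Fin n ≃ Fin (k * n), ∀ s t, s < t → ∀ i j, a (E (s, i)) < a (E (t, j)) := by
  have hsort : StrictMono (a ∘ Tuple.sort a) :=
    (Tuple.monotone_sort a).strictMono_of_injective (ha.comp (Tuple.sort a).injective)
  refine ⟨finProdFinEquiv.trans (Tuple.sort a), fun s t hst i j => hsort ?_⟩
  rw [Fin.lt_def, finProdFinEquiv_apply_val, finProdFinEquiv_apply_val]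
  calc i + n * s < n * (s + 1) := by rw [mul_add_one, add_comm]; lia
    _ ≤ n * t := Nat.mul_le_mul_left n hst
    _ ≤ j + n * t := Nat.le_add_left _ _

variable {n : ℕ}

lemma exists_common_isInnerMedian_affine {κ : Type*} [Fintype κ] [Nonempty κ]
    {a b : Fin 3 → κ → ℝ} (ha : ∀ s t, s < t → ∀ i j, a s i < a t j) :
    ∃ x v, IsInnerMedian (Sum.elim (fun i => a 0 i * x + b 0 i) (fun i => a 1 i * x + b 1 i)) v ∧
      IsInnerMedian (Sum.elim (fun i => a 1 i * x + b 1 i) (fun i => a 2 i * x + b 2 i)) v := by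
  obtain ⟨x₁, hx₁⟩ := exists_forall_affine_lt (fun p : Fin 3 × κ => a p.1 p.2) fun p => b p.1 p.2
  obtain ⟨x₂, hx₂⟩ := exists_forall_affine_lt (fun p : Fin 3 × κ => -a p.1 p.2) fun p => b p.1 p.2
  refine exists_common_isInnerMedian (f := fun s i x => a s i * x + b s i) (x₁ := x₁) (x₂ := -x₂)
    (fun s i => by fun_prop) (fun s t hst i j => hx₁ (s, i) (t, j) (ha s t hst i j))
    (fun s t hst i j => ?_)
  simpa using hx₂ (t, j) (s, i) (neg_lt_neg (ha s t hst i j))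

lemma InGeneralPosition.hasTverbergPartition_graphLine [NeZero n] {a b : Fin (3 * n) → ℝ}
    (h : InGeneralPosition fun i => graphLine (a i) (b i)) :
    HasTverbergPartition n fun i => graphLine (a i) (b i) := by
  have ha : a.Injective := fun i j => not_imp_not.1 fun hij =>
    slope_ne_of_existsUnique (h.1 i j hij)
  obtain ⟨E, hE⟩ := exists_equiv_forall_lt ha
  obtain ⟨x, v, h₀₁, h₁₂⟩ := exists_common_isInnerMedian_affine (a := fun s j => a (E (s, j)))
    (b := fun s j => b (E (s, j))) hE
  let y (s : Fin 3) (j : Fin n) : ℝ := a (E (s, j)) * x + b (E (s, j))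
  have hthrough : #{p : Fin 3 × Fin n | y p.1 p.2 = v} ≤ 2 := by
    classical
    have hle := h.card_filter_mem_le_two (x, v)
    refine le_trans (card_bijective E E.bijective fun p => ?_).le hle
    simp [y, mem_graphLine]
  obtain ⟨π, hπ⟩ := exists_perm_isAlternating h₀₁ h₁₂ hthrough
  refine hasTverbergPartition_of_equiv ((Equiv.prodShear (Equiv.refl (Fin 3)) π).trans E)
    (x := (x, v)) fun j => ?_
  refine mem_convexHull_crossings_of_isAlternating (fun s t hst => hE s t hst _ _) ?_ (hπ j)
  by_contra! hall
  exact h.2 _ _ _ (by simp) (by simp) (by simp) ⟨(x, v), hall 0, hall 1, hall 2⟩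

end Graphs

/-- The dual Tverberg theorem in the plane: `3n` lines in general position in `ℝ²`
(any two meet in exactly one point, no three concurrent) can be partitioned into `n`
triples such that the `n` triangles formed by the triples (convex hulls of the pairwise
intersection points) have a common point. The partition is encoded by a labeling
`c : Fin (3n) → Fin n` all of whose fibers have three elements. -/
theorem dual_tverberg_plane (n : ℕ) (hn : 1 ≤ n)
    (L : Fin (3 * n) → Set (EuclideanSpace ℝ (Fin 2)))
    (hL : ∀ i, IsLine (L i))
    (h2 : ∀ i j, i ≠ j → ∃! x, x ∈ L i ∧ x ∈ L j)
    (h3 : ∀ i j k, i ≠ j → j ≠ k → i ≠ k → ¬ ∃ x, x ∈ L i ∧ x ∈ L j ∧ x ∈ L k) :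
    ∃ c : Fin (3 * n) → Fin n,
      (∀ m : Fin n, {i | c i = m}.ncard = 3) ∧
      ∃ x : EuclideanSpace ℝ (Fin 2), ∀ m : Fin n,
        x ∈ convexHull ℝ {p | ∃ i j, i ≠ j ∧ c i = m ∧ c j = m ∧ p ∈ L i ∧ p ∈ L j} := by
  have : NeZero n := ⟨by lia⟩
  obtain ⟨Φ, a, b, hΦ⟩ := exists_linearEquiv_preimage_eq_graphLine hL
  have hgeneral : InGeneralPosition fun i => graphLine (a i) (b i) := by
    simpa only [hΦ] using InGeneralPosition.preimage ⟨h2, h3⟩ Φ.bijective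
  have hpartition : HasTverbergPartition n L :=
    .of_preimage Φ (by simpa only [hΦ] using hgeneral.hasTverbergPartition_graphLine)
  exact hpartition
end
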